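/- Define t_n(x) = Σ_{k=0}^n C(n,k)*C(x,k)*C(x+k,k)*2^k. For any odd prime p and p-adic integer x with 2x ≢ −1 (mod p), Σ_{n=0}^{p-1} (n+1)·t_n(x)^2 ≡ p/4 − (−1)^{⟨x⟩_p}·(2x^2+2x−1)·(p + 2(x − ⟨x⟩_p)) / (8x+4) (mod p^2). -/

import Mathlib

/-- Generalized binomial coefficient `C(x, k) = x(x-1)⋯(x-k+1)/k!` in `ℚ_[p]`. -/
noncomputable def gbinom {p : ℕ} [Fact p.Prime] (x : ℚ_[p]) (k : ℕ) : ℚ_[p] :=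
  (∏ i ∈ Finset.range k, (x - i)) / (k.factorial : ℚ_[p])

/-- The sequence `t_n(x) = ∑_{k=0}^n C(n,k) C(x,k) C(x+k,k) 2^k`. -/
noncomputable def tseq {p : ℕ} [Fact p.Prime] (x : ℚ_[p]) (n : ℕ) : ℚ_[p] :=
  ∑ k ∈ Finset.range (n+1), (n.choose k : ℚ_[p]) * gbinom x k * gbinom (x + (k : ℚ_[p])) k * 2^k

/-!
The sequences `t_n(x)` and `t_n(x + 1)` are contiguous: their sum `s` and difference `d` satisfy
first-order relations in `n`. With `c = x + 1`, these give closed antidifferences for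
`c s² + s d + c d²` and, after multiplication by `c - 1`, for `(2n + c² + 1) s d`; their values at
`n = p` are divisible by `p²`. So the congruences for the sums of `t_n²` and `(n + 1) t_n²` pass
from `x` to `x + 1`. If `p ∣ x`, one cannot divide by `c - 1 = x`; the second sum then telescopes
only up to a remainder, each term of which is a product of two multiples of `p`.

The start is `x = p y`: there `t_n(x) ≡ 1` modulo `p`, so that `t_n² ≡ 2 t_n - 1` modulo `p²`, and
the sums of `t_n` and `(n + 1) t_n` are computed by the hockey-stick identity. The induction covers
residues below `(p - 1) / 2`; the symmetry `t_n(-1 - x) = t_n(x)` gives those above.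
-/

open Finset

section BinomialTransform

variable {R : Type*} [CommRing R]

/-- The binomial transform `n ↦ ∑ k ≤ n, C(n, k) f k` of a sequence `f`. -/
def binomialTransform (f : ℕ → R) (n : ℕ) : R :=
  ∑ k ∈ range (n + 1), (n.choose k : R) * f k

theorem binomialTransform_eq_sum_range_of_lt (f : ℕ → R) {n N : ℕ} (h : n < N) :
    binomialTransform f n = ∑ k ∈ range N, (n.choose k : R) * f k := by
  refine sum_subset (range_subset_range.2 h) fun k _ hk => ?_
  rw [Nat.choose_eq_zero_of_lt (by simpa using hk), Nat.cast_zero, zero_mul]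

theorem binomialTransform_zero (f : ℕ → R) : binomialTransform f 0 = f 0 := by
  simp [binomialTransform]

theorem binomialTransform_add (f g : ℕ → R) (n : ℕ) :
    binomialTransform (fun k => f k + g k) n = binomialTransform f n + binomialTransform g n := by
  simp only [binomialTransform, mul_add, sum_add_distrib]

theorem binomialTransform_sub (f g : ℕ → R) (n : ℕ) :
    binomialTransform (fun k => f k - g k) n = binomialTransform f n - binomialTransform g n := by
  simp only [binomialTransform, mul_sub, sum_sub_distrib]

theorem binomialTransform_const_mul (c : R) (f : ℕ → R) (n : ℕ) :
    binomialTransform (fun k => c * f k) n = c * binomialTransform f n := by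
  simp only [binomialTransform, mul_sum, mul_left_comm c]

theorem binomialTransform_succ (f : ℕ → R) (n : ℕ) :
    binomialTransform f (n + 1) =
      binomialTransform f n + binomialTransform (fun k => f (k + 1)) n := by
  rw [binomialTransform_eq_sum_range_of_lt f (Nat.lt_succ_self (n + 1)),
    binomialTransform_eq_sum_range_of_lt f (show n < n + 1 + 1 by lia),
    sum_range_succ' _ (n + 1), sum_range_succ' _ (n + 1), binomialTransform]
  simp only [Nat.choose_succ_succ, Nat.cast_add, add_mul, sum_add_distrib, Nat.choose_zero_right]
  ring

theorem succ_mul_binomialTransform_succ_sub (f : ℕ → R) (n : ℕ) :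
    ((n : R) + 1) * (binomialTransform f (n + 1) - binomialTransform f n) =
      binomialTransform (fun k => (k : R) * f k) (n + 1) := by
  rw [binomialTransform_succ, add_sub_cancel_left, binomialTransform, binomialTransform,
    sum_range_succ' _ (n + 1), mul_sum, Nat.cast_zero, zero_mul, mul_zero, add_zero]
  refine sum_congr rfl fun k _ => ?_
  have h : ((n : R) + 1) * n.choose k = (n + 1).choose (k + 1) * ((k : R) + 1) := by
    exact_mod_cast congrArg (Nat.cast : ℕ → R) (Nat.add_one_mul_choose_eq n k)
  push_cast
  linear_combination f (k + 1) * h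

theorem sum_mul_binomialTransform (w f : ℕ → R) (N : ℕ) :
    ∑ n ∈ range N, w n * binomialTransform f n =
      ∑ k ∈ range N, (∑ n ∈ range N, w n * (n.choose k : R)) * f k := by
  simp only [sum_mul]
  rw [sum_comm]
  refine sum_congr rfl fun n hn => ?_
  rw [binomialTransform_eq_sum_range_of_lt f (mem_range.1 hn), mul_sum]
  exact sum_congr rfl fun k _ => (mul_assoc _ _ _).symm

theorem sum_binomialTransform (f : ℕ → R) (N : ℕ) :
    ∑ n ∈ range N, binomialTransform f n = ∑ k ∈ range N, (N.choose (k + 1) : R) * f k := by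
  have hockey_stick (k : ℕ) : ∑ n ∈ range N, (n.choose k : R) = N.choose (k + 1) :=
    sum_range_induction _ (fun n => (n.choose (k + 1) : R)) (by simp) N fun n _ => by
      simp only [Nat.choose_succ_succ n k]; push_cast; ring
  simpa only [one_mul, hockey_stick] using sum_mul_binomialTransform (fun _ => (1 : R)) f N

theorem sum_succ_mul_binomialTransform (f : ℕ → R) (N : ℕ) :
    ∑ n ∈ range N, ((n : R) + 1) * binomialTransform f n =
      ∑ k ∈ range N, ((k : R) + 1) * ((N + 1).choose (k + 2) : R) * f k := by
  have hockey_stick (k : ℕ) :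
      ∑ n ∈ range N, ((n : R) + 1) * n.choose k = ((k : R) + 1) * (N + 1).choose (k + 2) := by
    refine sum_range_induction _ (fun n => ((k : R) + 1) * ((n + 1).choose (k + 2) : R))
      (by simp [Nat.choose_eq_zero_of_lt]) N fun n _ => ?_
    have h : ((n : R) + 1) * n.choose k = (n + 1).choose (k + 1) * ((k : R) + 1) := by
      exact_mod_cast congrArg (Nat.cast : ℕ → R) (Nat.add_one_mul_choose_eq n k)
    rw [Nat.choose_succ_succ (n + 1)]
    push_cast
    linear_combination -h
  simpa only [hockey_stick] using sum_mul_binomialTransform (fun n => (n : R) + 1) f N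

end BinomialTransform

/-- The relations satisfied by the sum `s`, the difference `d` and the Euler derivative `v` of the
difference of two contiguous sequences `n ↦ t_n(x)`, `n ↦ t_n(x + 1)`, where `c = x + 1`. -/
structure ContiguousTriple {R : Type*} [CommRing R] (c : R) (s d v : ℕ → R) : Prop where
  d_zero : d 0 = 0
  v_zero : v 0 = 0
  v_succ_add (n : ℕ) : v (n + 1) + v n = 2 * c * s n
  d_succ_sub (n : ℕ) : ((n : R) + 1) * (d (n + 1) - d n) = v (n + 1)
  s_succ_sub (n : ℕ) : ((n : R) + 1) * (s (n + 1) - s n) = c * d (n + 1)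

namespace ContiguousTriple

variable {R : Type*} [CommRing R] {c : R} {s d v : ℕ → R}

/-- A linear form in a contiguous triple that is constant in `n` when `c = 1`. -/
def linearForm (c : R) (s d v : ℕ → R) (n : ℕ) : R :=
  v n + 2 * n * c * s n - 2 * c * (n + 1) * d n

/-- The quadratic form `G` for which `linearForm ^ 2 + (c - 1) * G` is an antidifference of
`8 c (c² - 1) (2n + c² + 1) s d`. -/
def quadraticForm (c : R) (s d v : ℕ → R) (n : ℕ) : R :=
  -4 * c * d n * ((n + 1) * (v n - 2 * n * s n)
    + (c + 1) * (2 * n * s n + c * v n - c * (n + 1) * d n))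

theorem linearForm_succ_sub (h : ContiguousTriple c s d v) (n : ℕ) :
    linearForm c s d v (n + 1) - linearForm c s d v n =
      2 * (c - 1) * (c * d (n + 1) - v (n + 1)) := by
  have hv := h.v_succ_add n
  have hd := h.d_succ_sub n
  have hs := h.s_succ_sub n
  simp only [linearForm, Nat.cast_add, Nat.cast_one]
  linear_combination -hv - 2 * c * hd + 2 * c * hs

theorem linearForm_zero (h : ContiguousTriple c s d v) : linearForm c s d v 0 = 0 := by
  simp [linearForm, h.d_zero, h.v_zero]

theorem sub_one_dvd_linearForm (h : ContiguousTriple c s d v) (n : ℕ) :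
    c - 1 ∣ linearForm c s d v n := by
  induction n with
  | zero => simp [h.linearForm_zero]
  | succ n ih =>
    rw [← sub_add_cancel (linearForm c s d v (n + 1)), h.linearForm_succ_sub]
    exact dvd_add (((dvd_mul_left _ _).mul_right _)) ih

theorem sum_sq_add_mul_add_sq (h : ContiguousTriple c s d v) (N : ℕ) :
    4 * c * ∑ n ∈ range N, (c * s n ^ 2 + s n * d n + c * d n ^ 2) =
      4 * c * (N * s N * d N - c * d N ^ 2) - v N ^ 2 := by
  rw [mul_sum]
  refine sum_range_induction _
    (fun n => 4 * c * ((n : R) * s n * d n - c * d n ^ 2) - v n ^ 2)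
    (by simp [h.d_zero, h.v_zero]) N fun n _ => ?_
  have hv := h.v_succ_add n
  have hd := h.d_succ_sub n
  have hs := h.s_succ_sub n
  push_cast
  grind

theorem sum_weight_mul (h : ContiguousTriple c s d v) (N : ℕ) :
    8 * c * (c + 1) * ∑ n ∈ range N, (2 * n + c ^ 2 + 1) * (s n * d n) =
      quadraticForm c s d v N + ∑ n ∈ range N, 2 * (c * d (n + 1) - v (n + 1)) *
        (linearForm c s d v (n + 1) + linearForm c s d v n) := by
  rw [← sub_eq_iff_eq_add, mul_sum, ← sum_sub_distrib]
  refine sum_range_induction _ (quadraticForm c s d v)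
    (by simp [quadraticForm, h.d_zero]) N fun n _ => ?_
  have hv := h.v_succ_add n
  have hd := h.d_succ_sub n
  have hs := h.s_succ_sub n
  simp only [quadraticForm, linearForm]
  push_cast
  grind

theorem sub_one_mul_sum_linearForm (h : ContiguousTriple c s d v) (N : ℕ) :
    (c - 1) * ∑ n ∈ range N, 2 * (c * d (n + 1) - v (n + 1)) *
        (linearForm c s d v (n + 1) + linearForm c s d v n) = linearForm c s d v N ^ 2 := by
  rw [mul_sum]
  refine sum_range_induction _ (fun n => linearForm c s d v n ^ 2)
    (by simp [h.linearForm_zero]) N fun n _ => ?_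
  linear_combination
    (linearForm c s d v (n + 1) + linearForm c s d v n) * h.linearForm_succ_sub n

theorem natCast_dvd_v (h : ContiguousTriple c s d v) (N : ℕ) : (N : R) ∣ v N := by
  cases N with
  | zero => simp [h.v_zero]
  | succ n => exact ⟨d (n + 1) - d n, by rw [← h.d_succ_sub, Nat.cast_succ]⟩

theorem natCast_dvd_d (h : ContiguousTriple c s d v) (hc : IsUnit c) (N : ℕ) :
    (N : R) ∣ d N := by
  cases N with
  | zero => simp [h.d_zero]
  | succ n =>
    exact hc.dvd_mul_left.1 ⟨s (n + 1) - s n, by rw [← h.s_succ_sub, Nat.cast_succ]⟩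

theorem sq_dvd_sum_sq_add_mul_add_sq (h : ContiguousTriple c s d v) (hc : IsUnit c) (N : ℕ) :
    (N : R) ^ 2 ∣ 4 * c * ∑ n ∈ range N, (c * s n ^ 2 + s n * d n + c * d n ^ 2) := by
  rw [h.sum_sq_add_mul_add_sq]
  obtain ⟨a, ha⟩ := h.natCast_dvd_d hc N
  obtain ⟨b, hb⟩ := h.natCast_dvd_v N
  rw [ha, hb]
  exact ⟨4 * c * (s N * a - c * a ^ 2) - b ^ 2, by ring⟩

theorem natCast_dvd_linearForm (h : ContiguousTriple c s d v) (hc : IsUnit c) (N : ℕ) :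
    (N : R) ∣ linearForm c s d v N :=
  dvd_sub (dvd_add (h.natCast_dvd_v N) (((dvd_mul_left _ _).mul_right _).mul_right _))
    ((h.natCast_dvd_d hc N).mul_left _)

theorem sq_dvd_quadraticForm (h : ContiguousTriple c s d v) (hc : IsUnit c) (N : ℕ) :
    (N : R) ^ 2 ∣ quadraticForm c s d v N := by
  obtain ⟨a, ha⟩ := h.natCast_dvd_d hc N
  obtain ⟨b, hb⟩ := h.natCast_dvd_v N
  rw [quadraticForm, ha, hb]
  exact ⟨-4 * c * a * ((N + 1) * (b - 2 * s N)
    + (c + 1) * (2 * s N + c * b - c * (N + 1) * a)), by ring⟩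

theorem sq_dvd_sum_weight_mul_of_isUnit (h : ContiguousTriple c s d v) (hc : IsUnit c)
    (hc' : IsUnit (c - 1)) (N : ℕ) :
    (N : R) ^ 2 ∣ 8 * c * (c + 1) * ∑ n ∈ range N, (2 * n + c ^ 2 + 1) * (s n * d n) := by
  rw [h.sum_weight_mul]
  refine dvd_add (h.sq_dvd_quadraticForm hc N) (hc'.dvd_mul_left.1 ?_)
  rw [h.sub_one_mul_sum_linearForm]
  exact pow_dvd_pow_of_dvd (h.natCast_dvd_linearForm hc N) 2

theorem sq_dvd_sum_weight_mul_of_dvd (h : ContiguousTriple c s d v) (hc : IsUnit c) {N : ℕ}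
    (hc' : (N : R) ∣ c - 1) (hN : ∀ n < N, (N : R) ∣ c * d (n + 1) - v (n + 1)) :
    (N : R) ^ 2 ∣ 8 * c * (c + 1) * ∑ n ∈ range N, (2 * n + c ^ 2 + 1) * (s n * d n) := by
  rw [h.sum_weight_mul]
  refine dvd_add (h.sq_dvd_quadraticForm hc N) (dvd_sum fun n hn => ?_)
  rw [sq]
  exact mul_dvd_mul ((hN n (mem_range.1 hn)).mul_left 2)
    (hc'.trans (dvd_add (h.sub_one_dvd_linearForm _) (h.sub_one_dvd_linearForm _)))

end ContiguousTriple

section BinomialRing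

variable {R : Type*} [CommRing R] [BinomialRing R]

theorem succ_mul_ringChoose_succ (x : R) (k : ℕ) :
    ((k : R) + 1) * Ring.choose x (k + 1) = (x - k) * Ring.choose x k := by
  have h := Ring.choose_smul_choose x k.le_succ
  simpa [mul_comm] using h

theorem succ_mul_ringChoose_add_one_succ (x : R) (k : ℕ) :
    ((k : R) + 1) * Ring.choose (x + 1) (k + 1) = (x + 1) * Ring.choose x k := by
  simpa using Ring.choose_add_smul_choose x k 1

theorem add_one_sub_mul_ringChoose_add_one (x : R) (k : ℕ) :
    (x + 1 - k) * Ring.choose (x + 1) k = (x + 1) * Ring.choose x k := by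
  rw [← succ_mul_ringChoose_succ, succ_mul_ringChoose_add_one_succ]

theorem add_one_mul_ringChoose_add_one_add (x : R) (k : ℕ) :
    (x + 1) * Ring.choose (x + 1 + k) k = (x + 1 + k) * Ring.choose (x + k) k := by
  have h := add_one_sub_mul_ringChoose_add_one (x + k) k
  rwa [show x + k + 1 = x + 1 + k by ring, add_sub_cancel_right] at h

/-- The coefficient `C(x, k) C(x + k, k) 2 ^ k` of `C(n, k)` in `t_n(x)`. -/
def tCoeff (x : R) (k : ℕ) : R :=
  Ring.choose x k * Ring.choose (x + k) k * 2 ^ k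

theorem tCoeff_zero (x : R) : tCoeff x 0 = 1 := by
  simp [tCoeff]

theorem sq_mul_tCoeff_succ (x : R) (k : ℕ) :
    ((k : R) + 1) ^ 2 * tCoeff x (k + 1) = 2 * (x - k) * (x + 1 + k) * tCoeff x k := by
  have h₁ := succ_mul_ringChoose_succ x k
  have h₂ := succ_mul_ringChoose_add_one_succ (x + k) k
  simp only [tCoeff, Nat.cast_succ, ← add_assoc, pow_succ (2 : R)]
  linear_combination 2 * 2 ^ k * ((k : R) + 1) * Ring.choose (x + k + 1) (k + 1) * h₁
    + 2 * 2 ^ k * (x - k) * Ring.choose x k * h₂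

theorem sub_mul_tCoeff_add_one (x : R) (k : ℕ) :
    (x + 1 - k) * tCoeff (x + 1) k = (x + 1 + k) * tCoeff x k := by
  have h₁ := add_one_sub_mul_ringChoose_add_one x k
  have h₂ := add_one_mul_ringChoose_add_one_add x k
  simp only [tCoeff]
  linear_combination 2 ^ k * Ring.choose (x + 1 + k) k * h₁ + 2 ^ k * Ring.choose x k * h₂

theorem succ_mul_tCoeff_add_one_succ_sub (x : R) (k : ℕ) :
    ((k : R) + 1) * (tCoeff (x + 1) (k + 1) - tCoeff x (k + 1)) =
      4 * (x + 1 + k) * tCoeff x k := by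
  have h₁ := succ_mul_ringChoose_add_one_succ x k
  have h₂ := succ_mul_ringChoose_add_one_succ (x + k) k
  have h₃ := add_one_mul_ringChoose_add_one_add x k
  have pascal₁ := Ring.choose_succ_succ x k
  have pascal₂ := Ring.choose_succ_succ (x + 1 + k) k
  rw [show x + k + 1 = x + 1 + k by ring] at h₂
  simp only [tCoeff, Nat.cast_succ, pow_succ (2 : R), ← add_assoc, pascal₂,
    show x + k + 1 = x + 1 + k by ring]
  linear_combination 2 * 2 ^ k * (((k : R) + 1) * Ring.choose (x + 1 + k) (k + 1) * pascal₁
    + Ring.choose (x + 1 + k) k * h₁ + Ring.choose x k * (h₂ + h₃))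

theorem tCoeff_neg_one_sub (x : R) : tCoeff (-1 - x) = tCoeff x := by
  funext k
  have h₁ : Ring.choose (-1 - x) k = (k : ℤ).negOnePow • Ring.choose (x + k) k := by
    rw [show (-1 - x : R) = -(x + 1) by ring, Ring.choose_neg]
    congr 2
    ring
  have h₂ : Ring.choose (-1 - x + k) k = (k : ℤ).negOnePow • Ring.choose x k := by
    rw [show (-1 - x + k : R) = -(x + 1 - k) by ring, Ring.choose_neg]
    congr 2
    ring
  rw [tCoeff, h₁, h₂, smul_mul_smul_comm, Int.units_mul_self, one_smul, tCoeff,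
    mul_comm (Ring.choose x k)]

/-- The value `t_n(x)` of the sequence of the theorem in any binomial ring. -/
def tPoly (x : R) (n : ℕ) : R :=
  binomialTransform (tCoeff x) n

theorem tPoly_neg_one_sub (x : R) : tPoly (-1 - x) = tPoly x := by
  funext n
  rw [tPoly, tPoly, tCoeff_neg_one_sub]

theorem contiguousTriple_tPoly (x : R) :
    ContiguousTriple (x + 1) (fun n => tPoly (x + 1) n + tPoly x n)
      (fun n => tPoly (x + 1) n - tPoly x n)
      (binomialTransform fun k => (k : R) * (tCoeff (x + 1) k - tCoeff x k)) where
  d_zero := by simp [tPoly, binomialTransform_zero, tCoeff_zero]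
  v_zero := by simp [binomialTransform_zero]
  v_succ_add n := by
    simp only [tPoly]
    rw [binomialTransform_succ, ← binomialTransform_add, ← binomialTransform_add,
      ← binomialTransform_add, ← binomialTransform_const_mul]
    congr! 2 with k
    push_cast
    linear_combination succ_mul_tCoeff_add_one_succ_sub x k - 2 * sub_mul_tCoeff_add_one x k
  d_succ_sub n := by
    simp only [tPoly, ← binomialTransform_sub]
    exact succ_mul_binomialTransform_succ_sub _ n
  s_succ_sub n := by
    simp only [tPoly, ← binomialTransform_sub, ← binomialTransform_add]
    rw [succ_mul_binomialTransform_succ_sub, ← binomialTransform_const_mul]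
    congr! 2 with k
    linear_combination -sub_mul_tCoeff_add_one x k

/-- The sum `∑ n < N, t_n(x) ^ 2`. -/
def sumSq (N : ℕ) (x : R) : R :=
  ∑ n ∈ range N, tPoly x n ^ 2

/-- The sum `∑ n < N, (n + 1) t_n(x) ^ 2`. -/
def weightedSumSq (N : ℕ) (x : R) : R :=
  ∑ n ∈ range N, ((n : R) + 1) * tPoly x n ^ 2

theorem sumSq_contiguous (N : ℕ) {x : R} (hx : IsUnit (x + 1)) :
    (N : R) ^ 2 ∣ 4 * (x + 1) * ((2 * x + 3) * sumSq N (x + 1) + (2 * x + 1) * sumSq N x) := by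
  convert (contiguousTriple_tPoly x).sq_dvd_sum_sq_add_mul_add_sq hx N using 2
  simp only [sumSq, mul_sum, ← sum_add_distrib]
  exact sum_congr rfl fun n _ => by ring

theorem sum_weight_mul_tPoly (N : ℕ) (x : R) :
    ∑ n ∈ range N, (2 * n + (x + 1) ^ 2 + 1) *
        ((tPoly (x + 1) n + tPoly x n) * (tPoly (x + 1) n - tPoly x n)) =
      2 * (weightedSumSq N (x + 1) - weightedSumSq N x)
        + x * (x + 2) * (sumSq N (x + 1) - sumSq N x) := by
  simp only [weightedSumSq, sumSq, ← sum_sub_distrib, mul_sum, ← sum_add_distrib]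
  exact sum_congr rfl fun n _ => by ring

theorem weightedSumSq_contiguous_of_isUnit (N : ℕ) {x : R} (hx : IsUnit x)
    (hx' : IsUnit (x + 1)) :
    (N : R) ^ 2 ∣ 8 * (x + 1) * (x + 2) * (2 * (weightedSumSq N (x + 1) - weightedSumSq N x)
      + x * (x + 2) * (sumSq N (x + 1) - sumSq N x)) := by
  rw [← sum_weight_mul_tPoly, show x + 2 = x + 1 + 1 by ring]
  exact (contiguousTriple_tPoly x).sq_dvd_sum_weight_mul_of_isUnit hx'
    (by rwa [add_sub_cancel_right]) N

theorem weightedSumSq_contiguous_of_dvd {N : ℕ} {x : R} (hx : (N : R) ∣ x)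
    (hx' : IsUnit (x + 1))
    (hN : ∀ n < N, (N : R) ∣ ((n : R) + 1) * (tPoly x (n + 1) - tPoly x n)) :
    (N : R) ^ 2 ∣ 8 * (x + 1) * (x + 2) * (2 * (weightedSumSq N (x + 1) - weightedSumSq N x)
      + x * (x + 2) * (sumSq N (x + 1) - sumSq N x)) := by
  rw [← sum_weight_mul_tPoly, show x + 2 = x + 1 + 1 by ring]
  have h := contiguousTriple_tPoly x
  refine h.sq_dvd_sum_weight_mul_of_dvd hx' (by rwa [add_sub_cancel_right]) fun n hn => ?_
  rw [← h.s_succ_sub, ← h.d_succ_sub]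
  convert (hN n hn).mul_left 2 using 1
  ring

end BinomialRing

section PadicBase

variable {p : ℕ} [Fact p.Prime]

theorem isUnit_of_dvd_sub_natCast {x : ℤ_[p]} {k : ℕ} (hx : (p : ℤ_[p]) ∣ x - k) (h₀ : 0 < k)
    (hk : k < p) : IsUnit x := by
  by_contra h
  rw [PadicInt.not_isUnit_iff, PadicInt.norm_lt_one_iff_dvd] at h
  refine Nat.not_dvd_of_pos_of_lt h₀ hk ?_
  rw [← PadicInt.norm_natCast_lt_one_iff, PadicInt.norm_lt_one_iff_dvd]
  simpa using dvd_sub h hx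

theorem isUnit_natCast_of_pos_of_lt {k : ℕ} (h₀ : 0 < k) (hk : k < p) :
    IsUnit (k : ℤ_[p]) :=
  isUnit_of_dvd_sub_natCast (by simp) h₀ hk

theorem isUnit_two_of_ne_two (hp : p ≠ 2) : IsUnit (2 : ℤ_[p]) := by
  exact_mod_cast isUnit_natCast_of_pos_of_lt (p := p) two_pos
    ((Fact.out : p.Prime).two_le.lt_of_ne' hp)

theorem dvd_neg_two_pow_sub_one (hp : p ≠ 2) : (p : ℤ_[p]) ∣ (-2) ^ (p - 1) - 1 := by
  have hcop : IsCoprime (-2 : ℤ) p := by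
    rw [IsCoprime.neg_left_iff]
    exact_mod_cast Nat.isCoprime_iff_coprime.2
      ((Nat.coprime_primes Nat.prime_two Fact.out).2 hp.symm)
  have h := (Int.ModEq.pow_card_sub_one_eq_one Fact.out hcop).symm.dvd
  exact_mod_cast (Int.castRingHom ℤ_[p]).map_dvd h

theorem sq_dvd_succ_mul_tCoeff_succ (y : ℤ_[p]) {k : ℕ} (hk : k + 1 < p) :
    (p : ℤ_[p]) ^ 2 ∣ ((k : ℤ_[p]) + 1) * tCoeff (p * y) (k + 1) + p * y * (-2) ^ (k + 1) := by
  induction k with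
  | zero =>
    have h := sq_mul_tCoeff_succ (p * y) 0
    rw [tCoeff_zero] at h
    refine ⟨2 * y ^ 2, ?_⟩
    push_cast at h ⊢
    linear_combination h
  | succ k ih =>
    obtain ⟨w, hw⟩ := ih (by lia)
    have hu₁ := isUnit_natCast_of_pos_of_lt k.succ_pos (show k + 1 < p by lia)
    have hu₂ := isUnit_natCast_of_pos_of_lt (k + 1).succ_pos hk
    have h := sq_mul_tCoeff_succ (p * y) (k + 1)
    refine (hu₁.mul hu₂).dvd_mul_left.1 ⟨2 * (p * y - (k + 1)) * (p * y + 1 + (k + 1)) * w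
      - 2 * y ^ 2 * (-2) ^ (k + 1) * (p * y + 1), ?_⟩
    rw [pow_succ (-2 : ℤ_[p]) (k + 1)]
    push_cast at h ⊢
    linear_combination (k + 1) * h + 2 * (p * y - (k + 1)) * (p * y + 1 + (k + 1)) * hw

theorem dvd_tCoeff (y : ℤ_[p]) {k : ℕ} (h₀ : 0 < k) (hk : k < p) :
    (p : ℤ_[p]) ∣ tCoeff (p * y) k := by
  obtain ⟨k, rfl⟩ := Nat.exists_eq_succ_of_ne_zero h₀.ne'
  have hu := isUnit_natCast_of_pos_of_lt h₀ hk
  obtain ⟨w, hw⟩ := sq_dvd_succ_mul_tCoeff_succ y hk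
  refine hu.dvd_mul_left.1 ⟨p * w - y * (-2) ^ (k + 1), ?_⟩
  push_cast
  linear_combination hw

theorem sq_dvd_tCoeff_sub (hp : p ≠ 2) (y : ℤ_[p]) {k : ℕ} (hk : k + 2 = p) :
    (p : ℤ_[p]) ^ 2 ∣ tCoeff (p * y) (k + 1) - p * y := by
  obtain ⟨a, ha⟩ := sq_dvd_succ_mul_tCoeff_succ y (show k + 1 < p by lia)
  obtain ⟨b, hb⟩ := dvd_tCoeff y k.succ_pos (show k + 1 < p by lia)
  obtain ⟨f, hf⟩ := dvd_neg_two_pow_sub_one hp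
  have hkp : (k : ℤ_[p]) + 2 = p := by exact_mod_cast hk
  rw [show p - 1 = k + 1 by lia] at hf
  exact ⟨b + y * f - a, by
    linear_combination -ha + p * hb + p * y * hf + tCoeff (p * y) (k + 1) * hkp⟩

theorem sq_dvd_four_mul_tCoeff_add (y : ℤ_[p]) {k : ℕ} (hk : k + 3 = p) :
    (p : ℤ_[p]) ^ 2 ∣ 4 * tCoeff (p * y) (k + 1) + p * y := by
  obtain ⟨a, ha⟩ := sq_dvd_succ_mul_tCoeff_succ y (show k + 1 < p by lia)
  obtain ⟨b, hb⟩ := dvd_tCoeff y k.succ_pos (show k + 1 < p by lia)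
  obtain ⟨f, hf⟩ := dvd_neg_two_pow_sub_one (show p ≠ 2 by lia)
  have hkp : (k : ℤ_[p]) + 3 = p := by exact_mod_cast hk
  rw [show p - 1 = k + 1 + 1 by lia, pow_succ] at hf
  exact ⟨2 * b - 2 * a - y * f, by
    linear_combination -2 * ha + 2 * p * hb - p * y * hf + 2 * tCoeff (p * y) (k + 1) * hkp⟩

theorem dvd_tPoly_sub_one (y : ℤ_[p]) {n : ℕ} (hn : n < p) :
    (p : ℤ_[p]) ∣ tPoly (p * y) n - 1 := by
  rw [tPoly, binomialTransform, sum_range_succ', tCoeff_zero, Nat.choose_zero_right,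
    Nat.cast_one, mul_one, add_sub_cancel_right]
  refine dvd_sum fun k hk => (dvd_tCoeff y k.succ_pos ?_).mul_left _
  have := mem_range.1 hk
  lia

theorem dvd_succ_mul_tPoly_succ_sub (y : ℤ_[p]) {n : ℕ} (hn : n < p) :
    (p : ℤ_[p]) ∣ ((n : ℤ_[p]) + 1) * (tPoly (p * y) (n + 1) - tPoly (p * y) n) := by
  rcases Nat.lt_or_ge (n + 1) p with h | h
  · rw [← sub_sub_sub_cancel_right _ _ (1 : ℤ_[p])]
    exact (dvd_sub (dvd_tPoly_sub_one y h) (dvd_tPoly_sub_one y hn)).mul_left _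
  · rw [← Nat.cast_succ, Nat.succ_eq_add_one, show n + 1 = p by lia]
    exact dvd_mul_right _ _

theorem sq_dvd_sum_mul_tPoly_sq_sub (w : ℕ → ℤ_[p]) (y : ℤ_[p]) :
    (p : ℤ_[p]) ^ 2 ∣ ∑ n ∈ range p, w n * tPoly (p * y) n ^ 2
      - (2 * ∑ n ∈ range p, w n * tPoly (p * y) n - ∑ n ∈ range p, w n) := by
  rw [mul_sum, ← sum_sub_distrib, ← sum_sub_distrib]
  refine dvd_sum fun n hn => ?_
  convert (pow_dvd_pow_of_dvd (dvd_tPoly_sub_one y (mem_range.1 hn)) 2).mul_left (w n) using 1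
  ring

theorem sq_dvd_sum_tPoly_sub (hp : p ≠ 2) (y : ℤ_[p]) :
    (p : ℤ_[p]) ^ 2 ∣ ∑ n ∈ range p, tPoly (p * y) n - (p + p * y) := by
  have hprime : p.Prime := Fact.out
  obtain ⟨k, hk⟩ := Nat.exists_eq_add_of_le' hprime.two_le
  have hmid : (p : ℤ_[p]) ^ 2 ∣
      ∑ j ∈ range k, (p.choose (j + 1 + 1) : ℤ_[p]) * tCoeff (p * y) (j + 1) := by
    refine dvd_sum fun j hj => ?_
    have hj := mem_range.1 hj
    rw [sq]
    exact mul_dvd_mul (Nat.cast_dvd_cast (hprime.dvd_choose_self (by lia) (by lia)))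
      (dvd_tCoeff y j.succ_pos (by lia))
  simp only [tPoly]
  rw [sum_binomialTransform, show range p = range (k + 1 + 1) by rw [hk], sum_range_succ,
    sum_range_succ', show k + 1 + 1 = p from hk.symm, tCoeff_zero, Nat.choose_self, zero_add,
    Nat.choose_one_right]
  convert dvd_add hmid (sq_dvd_tCoeff_sub hp y hk.symm) using 1
  push_cast
  ring

theorem dvd_add_one_choose {k : ℕ} (hk : 2 ≤ k) (hkp : k < p) : p ∣ (p + 1).choose k := by
  have hprime : p.Prime := Fact.out
  obtain ⟨j, rfl⟩ := Nat.exists_eq_add_of_le' hk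
  rw [Nat.choose_succ_succ]
  exact dvd_add (hprime.dvd_choose_self (by lia) (by lia))
    (hprime.dvd_choose_self (by lia) hkp)

theorem sq_dvd_four_mul_sum_succ_mul_tPoly_sub (hp : p ≠ 2) (y : ℤ_[p]) :
    (p : ℤ_[p]) ^ 2 ∣ 4 * ∑ n ∈ range p, ((n : ℤ_[p]) + 1) * tPoly (p * y) n
      - (2 * p + p * y) := by
  have htwo := (Fact.out : p.Prime).two_le
  obtain ⟨k, hk⟩ := Nat.exists_eq_add_of_le' (show 3 ≤ p by lia)
  have hkp : (k : ℤ_[p]) + 3 = p := by exact_mod_cast hk.symm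
  have hmid : (p : ℤ_[p]) ^ 2 ∣ ∑ j ∈ range k,
      (((j + 1 : ℕ) : ℤ_[p]) + 1) * ((p + 1).choose (j + 1 + 2) : ℤ_[p])
        * tCoeff (p * y) (j + 1) := by
    refine dvd_sum fun j hj => ?_
    have hj := mem_range.1 hj
    rw [sq]
    exact mul_dvd_mul ((Nat.cast_dvd_cast (dvd_add_one_choose (by lia) (by lia))).mul_left _)
      (dvd_tCoeff y j.succ_pos (by lia))
  have hlast : (p : ℤ_[p]) ^ 2 ∣ p * tCoeff (p * y) (k + 1 + 1) := by
    rw [sq]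
    exact mul_dvd_mul_left _ (dvd_tCoeff y (Nat.succ_pos _) (by lia))
  have hchoose : 2 * ((p + 1).choose 2 : ℤ_[p]) = (p + 1) * p := by
    have h := Nat.add_one_mul_choose_eq p 1
    rw [Nat.choose_one_right, mul_comm _ (1 + 1)] at h
    exact_mod_cast h.symm
  simp only [tPoly]
  rw [sum_succ_mul_binomialTransform, show range p = range (k + 1 + 1 + 1) by rw [hk],
    sum_range_succ, sum_range_succ, sum_range_succ', tCoeff_zero, show k + 1 + 2 = p from hk.symm,
    show k + 1 + 1 + 2 = p + 1 by lia, Nat.choose_self, Nat.choose_succ_self_right]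
  convert dvd_add (dvd_sub (hmid.mul_left 4) (sq_dvd_four_mul_tCoeff_add y hk.symm))
    (dvd_add (hlast.mul_left 4) (dvd_mul_right _ (2 + 4 * tCoeff (p * y) (k + 1)))) using 1
  push_cast
  linear_combination 2 * hchoose + (4 * tCoeff ((p : ℤ_[p]) * y) (k + 1) * (p + 1)
    + 4 * tCoeff ((p : ℤ_[p]) * y) (k + 1 + 1)) * hkp

theorem sq_dvd_sumSq_sub (hp : p ≠ 2) (y : ℤ_[p]) :
    (p : ℤ_[p]) ^ 2 ∣ sumSq p (p * y) - (p + 2 * (p * y)) := by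
  have h := sq_dvd_sum_mul_tPoly_sq_sub (fun _ => 1) y
  simp only [one_mul, sum_const, card_range, nsmul_eq_mul, mul_one] at h
  convert dvd_add h ((sq_dvd_sum_tPoly_sub hp y).mul_left 2) using 1
  rw [sumSq]
  ring

theorem sq_dvd_four_mul_weightedSumSq_sub (hp : p ≠ 2) (y : ℤ_[p]) :
    (p : ℤ_[p]) ^ 2 ∣ 4 * weightedSumSq p (p * y) - (2 * p + 2 * (p * y)) := by
  have hsum : 2 * ∑ n ∈ range p, ((n : ℤ_[p]) + 1) = ((p : ℤ_[p]) + 1) * p := by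
    rw [mul_sum]
    refine sum_range_induction _ (fun n => ((n : ℤ_[p]) + 1) * n) (by simp) p fun n _ => ?_
    push_cast
    ring
  have h := (sq_dvd_sum_mul_tPoly_sq_sub (fun n => (n : ℤ_[p]) + 1) y).mul_left 4
  convert dvd_add h (dvd_sub ((sq_dvd_four_mul_sum_succ_mul_tPoly_sub hp y).mul_left 2)
    (dvd_mul_left ((p : ℤ_[p]) ^ 2) 2)) using 1
  rw [weightedSumSq]
  linear_combination -2 * hsum

end PadicBase

section Congruence

variable {p : ℕ} [Fact p.Prime]

/-- The congruences modulo `p ^ 2`, freed of denominators, for the sums of `t_n(x) ^ 2` and of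
`(n + 1) t_n(x) ^ 2` over `n < p`; here `m` stands for the residue of `x` modulo `p`. -/
structure SumSqCongruence (x : ℤ_[p]) (m : ℕ) : Prop where
  sumSq : (p : ℤ_[p]) ^ 2 ∣ (2 * x + 1) * sumSq p x - (-1) ^ m * (p + 2 * (x - m))
  weightedSumSq : (p : ℤ_[p]) ^ 2 ∣ 4 * (2 * x + 1) * weightedSumSq p x
    - (p * (2 * x + 1) - (-1) ^ m * (2 * x ^ 2 + 2 * x - 1) * (p + 2 * (x - m)))

theorem sumSqCongruence_zero (hp : p ≠ 2) {x : ℤ_[p]} (hx : (p : ℤ_[p]) ∣ x) :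
    SumSqCongruence x 0 := by
  obtain ⟨y, rfl⟩ := hx
  obtain ⟨a, ha⟩ := sq_dvd_sumSq_sub hp y
  obtain ⟨b, hb⟩ := sq_dvd_four_mul_weightedSumSq_sub hp y
  constructor
  · refine ⟨(2 * (p * y) + 1) * a + 2 * y + 4 * y ^ 2, ?_⟩
    push_cast
    linear_combination (2 * (p * y) + 1) * ha
  · refine ⟨(2 * (p * y) + 1) * b + 4 * y + 8 * y ^ 2 + 2 * p * y ^ 2 + 4 * p * y ^ 3, ?_⟩
    push_cast
    linear_combination (2 * (p * y) + 1) * hb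

theorem sq_dvd_sumSq_succ_add (hp : p ≠ 2) {x : ℤ_[p]} (hx : IsUnit (x + 1)) :
    (p : ℤ_[p]) ^ 2 ∣ (2 * x + 3) * sumSq p (x + 1) + (2 * x + 1) * sumSq p x := by
  have hu : IsUnit (4 * (x + 1)) := by
    convert ((isUnit_two_of_ne_two hp).pow 2).mul hx using 2
    norm_num
  exact hu.dvd_mul_left.1 (sumSq_contiguous p hx)

theorem sq_dvd_weightedSumSq_succ_sub {x : ℤ_[p]} {m : ℕ} (hx : (p : ℤ_[p]) ∣ x - m)
    (hm : m + 2 < p) :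
    (p : ℤ_[p]) ^ 2 ∣ 2 * (weightedSumSq p (x + 1) - weightedSumSq p x)
      + x * (x + 2) * (sumSq p (x + 1) - sumSq p x) := by
  have hx₁ : IsUnit (x + 1) :=
    isUnit_of_dvd_sub_natCast (k := m + 1) (by simpa using hx) m.succ_pos (by lia)
  have hx₂ : IsUnit (x + 2) :=
    isUnit_of_dvd_sub_natCast (k := m + 2) (by simpa using hx) (by lia) hm
  have hu : IsUnit (8 * (x + 1) * (x + 2)) := by
    convert (((isUnit_two_of_ne_two (by lia)).pow 3).mul hx₁).mul hx₂ using 3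
    norm_num
  refine hu.dvd_mul_left.1 ?_
  rcases m.eq_zero_or_pos with rfl | hm₀
  · rw [Nat.cast_zero, sub_zero] at hx
    refine weightedSumSq_contiguous_of_dvd hx hx₁ fun n hn => ?_
    obtain ⟨y, rfl⟩ := hx
    exact dvd_succ_mul_tPoly_succ_sub y hn
  · exact weightedSumSq_contiguous_of_isUnit p
      (isUnit_of_dvd_sub_natCast hx hm₀ (by lia)) hx₁

theorem SumSqCongruence.succ {x : ℤ_[p]} {m : ℕ} (h : SumSqCongruence x m)
    (hx : (p : ℤ_[p]) ∣ x - m) (hm : 2 * (m + 1) + 1 < p) : SumSqCongruence (x + 1) (m + 1) := by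
  have hu₁ : IsUnit (x + 1) :=
    isUnit_of_dvd_sub_natCast (k := m + 1) (by simpa using hx) m.succ_pos (by lia)
  have hu₂ : IsUnit (2 * x + 1) := by
    refine isUnit_of_dvd_sub_natCast (k := 2 * m + 1) ?_ (by lia) (show 2 * m + 1 < p by lia)
    convert hx.mul_left 2 using 1
    push_cast
    ring
  obtain ⟨a, ha⟩ := h.sumSq
  obtain ⟨b, hb⟩ := h.weightedSumSq
  obtain ⟨c, hc⟩ := sq_dvd_sumSq_succ_add (by lia) hu₁
  obtain ⟨d, hd⟩ := sq_dvd_weightedSumSq_succ_sub hx (by lia)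
  refine ⟨⟨c - a, ?_⟩, hu₂.dvd_mul_left.1
    ⟨2 * (2 * x + 3) * (2 * x + 1) * d + (2 * x + 3) * b - 2 * x * (x + 2) * (2 * x + 1) * (c - a)
      + 2 * x * (x + 2) * (2 * x + 3) * a, ?_⟩⟩
  · push_cast [pow_succ (-1 : ℤ_[p]) m]
    linear_combination hc - ha
  · push_cast [pow_succ (-1 : ℤ_[p]) m]
    linear_combination 2 * (2 * x + 3) * (2 * x + 1) * hd + (2 * x + 3) * hb
      - 2 * x * (x + 2) * (2 * x + 1) * (hc - ha) + 2 * x * (x + 2) * (2 * x + 3) * ha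

theorem sumSqCongruence_of_two_mul_add_one_lt (hp : p ≠ 2) {x : ℤ_[p]} {m : ℕ}
    (hx : (p : ℤ_[p]) ∣ x - m) (hm : 2 * m + 1 < p) : SumSqCongruence x m := by
  induction m generalizing x with
  | zero => exact sumSqCongruence_zero hp (by simpa using hx)
  | succ m ih =>
    have hx' : (p : ℤ_[p]) ∣ x - 1 - m := by
      simpa [sub_sub, add_comm] using hx
    simpa using (ih hx' (by lia)).succ hx' hm

theorem two_mul_add_one_ne_of_not_dvd {x : ℤ_[p]} {m : ℕ} (hx : (p : ℤ_[p]) ∣ x - m)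
    (h : ¬ (p : ℤ_[p]) ∣ 2 * x + 1) : 2 * m + 1 ≠ p := by
  intro hmp
  have hmp' : 2 * (m : ℤ_[p]) + 1 = p := by exact_mod_cast congrArg (Nat.cast : ℕ → ℤ_[p]) hmp
  refine h ?_
  convert dvd_add (hx.mul_left 2) (dvd_refl (p : ℤ_[p])) using 1
  linear_combination hmp'

theorem sq_dvd_weightedSumSq_sub (hp : p ≠ 2) {x : ℤ_[p]} {m : ℕ} (hx : (p : ℤ_[p]) ∣ x - m)
    (hm : m < p) (h2x : ¬ (p : ℤ_[p]) ∣ 2 * x + 1) :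
    (p : ℤ_[p]) ^ 2 ∣ 4 * (2 * x + 1) * weightedSumSq p x
      - (p * (2 * x + 1) - (-1) ^ m * (2 * x ^ 2 + 2 * x - 1) * (p + 2 * (x - m))) := by
  rcases lt_or_gt_of_ne (two_mul_add_one_ne_of_not_dvd hx h2x) with hlt | hgt
  · exact (sumSqCongruence_of_two_mul_add_one_lt hp hx hlt).weightedSumSq
  · obtain ⟨k, hk⟩ := Nat.exists_eq_add_of_le (show m + 1 ≤ p by lia)
    have hkp : (p : ℤ_[p]) = m + 1 + k := by exact_mod_cast hk
    have hx' : (p : ℤ_[p]) ∣ -1 - x - k := by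
      convert (dvd_add hx (dvd_refl (p : ℤ_[p]))).neg_right using 1
      linear_combination hkp
    have hsign : (-1 : ℤ_[p]) ^ k = (-1) ^ m := by
      have hodd := (Fact.out : p.Prime).odd_of_ne_two hp
      rw [hk] at hodd
      exact neg_one_pow_congr (by grind)
    have h := (sumSqCongruence_of_two_mul_add_one_lt hp hx' (by lia)).weightedSumSq
    rw [hsign, weightedSumSq, tPoly_neg_one_sub] at h
    convert h.neg_right using 1
    rw [weightedSumSq]
    linear_combination 2 * (-1) ^ m * (2 * x ^ 2 + 2 * x - 1) * hkp

end Congruence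

section Comparison

variable {p : ℕ} [Fact p.Prime]

theorem gbinom_coe (x : ℤ_[p]) (k : ℕ) :
    gbinom (x : ℚ_[p]) k = ((Ring.choose x k : ℤ_[p]) : ℚ_[p]) := by
  induction k with
  | zero => simp [gbinom]
  | succ k ih =>
    have hk : (k : ℚ_[p]) + 1 ≠ 0 := by exact_mod_cast k.succ_ne_zero
    have hchoose := congrArg ((↑) : ℤ_[p] → ℚ_[p]) (succ_mul_ringChoose_succ x k)
    push_cast at hchoose
    rw [← ih] at hchoose
    refine mul_left_cancel₀ hk (Eq.trans ?_ hchoose.symm)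
    rw [gbinom, gbinom, prod_range_succ, Nat.factorial_succ]
    push_cast
    field_simp

theorem tseq_coe (x : ℤ_[p]) (n : ℕ) :
    tseq (x : ℚ_[p]) n = ((tPoly x n : ℤ_[p]) : ℚ_[p]) := by
  rw [tPoly, binomialTransform, PadicInt.coe_sum, tseq]
  refine sum_congr rfl fun k _ => ?_
  have hadd : (x : ℚ_[p]) + k = ((x + k : ℤ_[p]) : ℚ_[p]) := by push_cast; rfl
  have htwo : ((2 : ℤ_[p]) : ℚ_[p]) = 2 := rfl
  rw [hadd, gbinom_coe, gbinom_coe, tCoeff]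
  push_cast [htwo]
  ring

theorem weightedSumSq_coe (N : ℕ) (x : ℤ_[p]) :
    ((weightedSumSq N x : ℤ_[p]) : ℚ_[p]) =
      ∑ n ∈ range N, ((n : ℚ_[p]) + 1) * tseq (x : ℚ_[p]) n ^ 2 := by
  simp only [weightedSumSq, tseq_coe, PadicInt.coe_sum]
  exact sum_congr rfl fun n _ => by push_cast; rfl

theorem norm_coe_le_zpow_neg_iff_pow_dvd (x : ℤ_[p]) (n : ℕ) :
    ‖(x : ℚ_[p])‖ ≤ (p : ℝ) ^ (-n : ℤ) ↔ (p : ℤ_[p]) ^ n ∣ x := by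
  rw [← PadicInt.norm_def, PadicInt.norm_le_pow_iff_mem_span_pow, Ideal.mem_span_singleton]

theorem norm_coe_le_inv_iff_dvd (x : ℤ_[p]) :
    ‖(x : ℚ_[p])‖ ≤ (p : ℝ)⁻¹ ↔ (p : ℤ_[p]) ∣ x := by
  simpa using norm_coe_le_zpow_neg_iff_pow_dvd x 1

theorem norm_isUnit_mul {u : ℤ_[p]} (hu : IsUnit u) (a : ℚ_[p]) :
    ‖(u : ℚ_[p]) * a‖ = ‖a‖ := by
  rw [norm_mul, ← PadicInt.norm_def, PadicInt.isUnit_iff.1 hu, one_mul]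

end Comparison

theorem stmt_15 (p : ℕ) [Fact p.Prime] (hp : p ≠ 2) (x : ℚ_[p]) (hx : ‖x‖ ≤ 1)
    (m : ℕ) (hm : m < p) (hxm : ‖x - m‖ ≤ (p : ℝ)⁻¹)
    (h2x : ¬ ‖2*x + 1‖ ≤ (p : ℝ)⁻¹) :
    ‖(∑ n ∈ Finset.range p, ((n : ℚ_[p]) + 1) * (tseq x n)^2) -
        ((p : ℚ_[p])/4 - (-1)^m * (2*x^2 + 2*x - 1) * ((p : ℚ_[p]) + 2*(x - m)) / (8*x + 4))‖
      ≤ (p : ℝ) ^ (-2 : ℤ) := by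
  obtain ⟨x, rfl⟩ : ∃ z : ℤ_[p], (z : ℚ_[p]) = x := ⟨⟨x, hx⟩, rfl⟩
  have hxm : (p : ℤ_[p]) ∣ x - m := (norm_coe_le_inv_iff_dvd _).1 hxm
  have h2x : ¬ (p : ℤ_[p]) ∣ 2 * x + 1 := fun h => h2x ((norm_coe_le_inv_iff_dvd _).2 h)
  have hu : IsUnit (2 * x + 1) := by
    rwa [← PadicInt.norm_lt_one_iff_dvd, ← PadicInt.not_isUnit_iff, not_not] at h2x
  have hne : 2 * (x : ℚ_[p]) + 1 ≠ 0 := fun h => hu.ne_zero (Subtype.ext h)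
  have hu' : IsUnit (2 ^ 2 * (2 * x + 1)) := ((isUnit_two_of_ne_two hp).pow 2).mul hu
  have h := (norm_coe_le_zpow_neg_iff_pow_dvd _ 2).2 (sq_dvd_weightedSumSq_sub hp hxm hm h2x)
  rw [← norm_isUnit_mul hu', ← weightedSumSq_coe]
  refine (congrArg norm ?_).trans_le h
  have htwo : ((2 : ℤ_[p]) : ℚ_[p]) = 2 := rfl
  have hfour : ((4 : ℤ_[p]) : ℚ_[p]) = 4 := rfl
  push_cast [htwo, hfour]
  rw [show 8 * (x : ℚ_[p]) + 4 = 4 * (2 * x + 1) by ring]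
  field_simp
  ring
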